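/- (Theorem 2: (1−ε)/2 approximation guarantee of the TrimCaching Spec algorithm) Let Q : Fin M → ℝ be storage capacities and ε ∈ ℝ with 0 ≤ ε ≤ 1. Suppose the placement family Ŝ : Fin M → Finset I satisfies, for every m : Fin M: (i) g(Ŝ m) ≤ Q m, and (ii) for every finite A ⊆ I with g(A) ≤ Q m, (1 − ε) · Uhat m (Function.update Ŝ m A) ≤ Uhat m Ŝ (i.e., each per-server sub-problem is solved to within a factor (1 − ε), given the choices already made on earlier servers). Then for every placement family S* : Fin M → Finset I with g(S* m) ≤ Q m for all m, one has ((1 − ε)/2) · U(graph S*) ≤ U(graph Ŝ). -/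

import Mathlib

/-!
Charge every hit of a placement `S` to the first server that achieves it. Since each request has at
most one first server, the per-server values of `Shat` add up to at most `U (graphOf Shat)`
(`sum_Uhat_le_U`). A request hit by `Sstar` at some server `m` is either already hit by `Shat`, or
missed by `Shat` everywhere, in which case it is counted in the per-server value of `Shat` with
`Shat m` replaced by `Sstar m`; hence
`U (graphOf Sstar) ≤ U (graphOf Shat) + ∑ m, Uhat m (Function.update Shat m (Sstar m))`
(`U_le_U_add_sum_Uhat`). Multiplying by `1 - ε` and using near-optimality on each server bounds
the right-hand side by `(1 - ε) U (graphOf Shat) + U (graphOf Shat) ≤ 2 U (graphOf Shat)`.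
-/

open scoped Classical

/-- Cache-hit value of a placement set `S ⊆ M × I`. -/
noncomputable def U {M K I : Type*} [Fintype K] [Fintype I]
    (p : K → I → ℝ) (Tlat : M → K → I → ℝ) (Tbar : K → I → ℝ)
    (S : Finset (M × I)) : ℝ :=
  ∑ k : K, ∑ i : I,
    p k i * (if ∃ m, (m, i) ∈ S ∧ Tlat m k i ≤ Tbar k i then 1 else 0)

/-- The graph of a placement family: the set of pairs `(m, i)` with `i ∈ S m`. -/
noncomputable def graphOf {M : ℕ} {I : Type*} [Fintype I]
    (S : Fin M → Finset I) : Finset (Fin M × I) :=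
  Finset.univ.filter (fun mi => mi.2 ∈ S mi.1)

/-- Successive per-server value. -/
noncomputable def Uhat {M : ℕ} {K I : Type*} [Fintype K] [Fintype I]
    (p : K → I → ℝ) (Tlat : Fin M → K → I → ℝ) (Tbar : K → I → ℝ)
    (m : Fin M) (S : Fin M → Finset I) : ℝ :=
  ∑ k : K, ∑ i : I,
    p k i * (if (i ∈ S m ∧ Tlat m k i ≤ Tbar k i ∧
      ∀ m' < m, ¬(i ∈ S m' ∧ Tlat m' k i ≤ Tbar k i)) then 1 else 0)

/-- Parameter-sharing storage usage. -/
noncomputable def g {I J : Type*} [Fintype J]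
    (D : J → ℝ) (blocks : I → Finset J) (S : Finset I) : ℝ :=
  ∑ j : J, D j * (if ∃ i ∈ S, j ∈ blocks i then 1 else 0)

lemma U_nonneg {M K I : Type*} [Fintype K] [Fintype I]
    (p : K → I → ℝ) (hp : ∀ k i, 0 ≤ p k i)
    (Tlat : M → K → I → ℝ) (Tbar : K → I → ℝ) (S : Finset (M × I)) :
    0 ≤ U p Tlat Tbar S :=
  Finset.sum_nonneg fun k _ => Finset.sum_nonneg fun i _ =>
    mul_nonneg (hp k i) (by split_ifs <;> norm_num)

/-- Interchange of summation: the total over servers, request by request. -/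
lemma sum_Uhat_eq {M : ℕ} {K I : Type*} [Fintype K] [Fintype I]
    (p : K → I → ℝ) (Tlat : Fin M → K → I → ℝ) (Tbar : K → I → ℝ)
    (S : Fin M → Fin M → Finset I) :
    ∑ m, Uhat p Tlat Tbar m (S m) = ∑ k : K, ∑ i : I, p k i *
      ∑ m, (if (i ∈ S m m ∧ Tlat m k i ≤ Tbar k i ∧
        ∀ m' < m, ¬(i ∈ S m m' ∧ Tlat m' k i ≤ Tbar k i)) then 1 else 0) := by
  unfold Uhat
  rw [Finset.sum_comm]
  refine Finset.sum_congr rfl fun k _ => ?_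
  rw [Finset.sum_comm]
  exact Finset.sum_congr rfl fun i _ => (Finset.mul_sum _ _ _).symm

lemma sum_Uhat_le_U {M : ℕ} {K I : Type*} [Fintype K] [Fintype I]
    (p : K → I → ℝ) (hp : ∀ k i, 0 ≤ p k i)
    (Tlat : Fin M → K → I → ℝ) (Tbar : K → I → ℝ) (S : Fin M → Finset I) :
    ∑ m, Uhat p Tlat Tbar m S ≤ U p Tlat Tbar (graphOf S) := by
  rw [sum_Uhat_eq p Tlat Tbar fun _ => S]
  refine Finset.sum_le_sum fun k _ => Finset.sum_le_sum fun i _ =>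
    mul_le_mul_of_nonneg_left ?_ (hp k i)
  by_cases h : ∃ m, i ∈ S m ∧ Tlat m k i ≤ Tbar k i ∧
      ∀ m' < m, ¬(i ∈ S m' ∧ Tlat m' k i ≤ Tbar k i)
  · obtain ⟨m, hm, hT, hmin⟩ := h
    -- only the first serving server `m` contributes to the sum
    rw [Finset.sum_eq_single m, if_pos ⟨hm, hT, hmin⟩,
      if_pos ⟨m, by simpa [graphOf] using hm, hT⟩]
    · intro n _ hn
      refine if_neg fun ⟨hn1, hn2, hn3⟩ => ?_
      rcases lt_or_gt_of_ne hn with hlt | hgt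
      · exact hmin n hlt ⟨hn1, hn2⟩
      · exact hn3 m hgt ⟨hm, hT⟩
    · simp
  · rw [Finset.sum_eq_zero fun m _ => if_neg fun hm => h ⟨m, hm⟩]
    split_ifs <;> norm_num

lemma U_le_U_add_sum_Uhat {M : ℕ} {K I : Type*} [Fintype K] [Fintype I]
    (p : K → I → ℝ) (hp : ∀ k i, 0 ≤ p k i)
    (Tlat : Fin M → K → I → ℝ) (Tbar : K → I → ℝ) (S R : Fin M → Finset I) :
    U p Tlat Tbar (graphOf R) ≤ U p Tlat Tbar (graphOf S) +
      ∑ m, Uhat p Tlat Tbar m (Function.update S m (R m)) := by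
  rw [sum_Uhat_eq p Tlat Tbar fun m => Function.update S m (R m)]
  unfold U
  simp only [← Finset.sum_add_distrib, ← mul_add]
  refine Finset.sum_le_sum fun k _ => Finset.sum_le_sum fun i _ =>
    mul_le_mul_of_nonneg_left ?_ (hp k i)
  have hnn : ∀ m ∈ (Finset.univ : Finset (Fin M)), (0 : ℝ) ≤
      if (i ∈ Function.update S m (R m) m ∧ Tlat m k i ≤ Tbar k i ∧
        ∀ m' < m, ¬(i ∈ Function.update S m (R m) m' ∧ Tlat m' k i ≤ Tbar k i))
      then 1 else 0 := fun m _ => by split_ifs <;> norm_num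
  by_cases hS : ∃ m, (m, i) ∈ graphOf S ∧ Tlat m k i ≤ Tbar k i
  · rw [if_pos hS]
    have := Finset.sum_nonneg hnn
    split_ifs <;> linarith
  · rw [if_neg hS, zero_add]
    by_cases hR : ∃ m, (m, i) ∈ graphOf R ∧ Tlat m k i ≤ Tbar k i
    · rw [if_pos hR]
      obtain ⟨m, hm, hT⟩ := hR
      refine le_trans (le_of_eq ?_) (Finset.single_le_sum hnn (Finset.mem_univ m))
      rw [if_pos]
      refine ⟨by simpa [graphOf] using hm, hT, fun m' hlt h => hS ⟨m', ?_, h.2⟩⟩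
      have h' := h.1
      rw [Function.update_of_ne hlt.ne] at h'
      simpa [graphOf] using h'
    · rw [if_neg hR]
      exact Finset.sum_nonneg hnn

/-- Theorem 2: if each per-server sub-problem is solved to within a factor
`(1 − ε)` given earlier choices, the resulting placement achieves at least
`(1 − ε)/2` times the optimal cache-hit value. -/
theorem trimcaching_spec_guarantee {M : ℕ} {K I J : Type*}
    [Fintype K] [Fintype I] [Fintype J]
    (p : K → I → ℝ) (hp : ∀ k i, 0 ≤ p k i)
    (Tlat : Fin M → K → I → ℝ) (Tbar : K → I → ℝ)
    (D : J → ℝ) (hD : ∀ j, 0 ≤ D j) (blocks : I → Finset J)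
    (Q : Fin M → ℝ) (ε : ℝ) (hε0 : 0 ≤ ε) (hε1 : ε ≤ 1)
    (Shat : Fin M → Finset I)
    (hfeas : ∀ m : Fin M, g D blocks (Shat m) ≤ Q m)
    (hopt : ∀ m : Fin M, ∀ A : Finset I, g D blocks A ≤ Q m →
      (1 - ε) * Uhat p Tlat Tbar m (Function.update Shat m A) ≤
        Uhat p Tlat Tbar m Shat)
    (Sstar : Fin M → Finset I)
    (hstar : ∀ m : Fin M, g D blocks (Sstar m) ≤ Q m) :
    ((1 - ε) / 2) * U p Tlat Tbar (graphOf Sstar) ≤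
      U p Tlat Tbar (graphOf Shat) := by
  have h1 := sum_Uhat_le_U p hp Tlat Tbar Shat
  have h2 := U_le_U_add_sum_Uhat p hp Tlat Tbar Shat Sstar
  have h3 : (1 - ε) * ∑ m, Uhat p Tlat Tbar m (Function.update Shat m (Sstar m)) ≤
      ∑ m, Uhat p Tlat Tbar m Shat := by
    rw [Finset.mul_sum]
    exact Finset.sum_le_sum fun m _ => hopt m _ (hstar m)
  have h4 := mul_le_mul_of_nonneg_left h2 (sub_nonneg.2 hε1)
  have h5 := mul_nonneg hε0 (U_nonneg p hp Tlat Tbar (graphOf Shat))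
  linarith
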